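/- arXiv:2509.01948 — 3 statements merged into one kernel-verified Lean document; each statement's English description precedes it below -/
import Mathlib

section
/- Let X be a standard Borel space and D a locally countable Borel directed graph on X whose underlying graph has finite Borel chromatic number. Then there exists a Borel quasi-kernel in D, i.e., a Borel set M ⊆ X that is independent in the underlying graph of D and satisfies ρ(x, M) ≤ 2 for every x ∈ X, where ρ denotes directed distance. -/
open Set Filter Topology MeasureTheory

/-- The set `S` is contained in a measurable subset of the range of `f`. -/
def IsRangeSmall {Z X : Type*} [MeasurableSpace X] (f : Z → X) (S : Set X) : Prop :=
  ∃ B, MeasurableSet B ∧ S ⊆ B ∧ B ⊆ range f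

theorem exists_seq_isClosed_separating (Z : Type*) [MetricSpace Z] [SecondCountableTopology Z]
    {ε : ENNReal} (hε : 0 < ε) :
    ∃ K : ℕ → Set Z, (∀ n, IsClosed (K n) ∧ Metric.ediam (K n) ≤ ε) ∧
      ∀ z w, z ≠ w → ∃ i j, z ∈ K i ∧ w ∈ K j ∧ Disjoint (K i) (K j) := by
  rcases isEmpty_or_nonempty Z with hZ | hZ
  · exact ⟨fun _ => ∅, by simp, fun z => isEmptyElim z⟩
  let L : Set (Set Z) := {s | ∃ n m : ℕ,
    s = Metric.closedEBall (TopologicalSpace.denseSeq Z n) (m : ENNReal)⁻¹ ∧ 2 * (m : ENNReal)⁻¹ ≤ ε}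
  have hnear : ∀ z : Z, ∀ δ : ENNReal, 0 < δ → ∃ s ∈ L, z ∈ s ∧ s ⊆ Metric.closedEBall z δ := by
    intro z δ hδ
    have hpos : min (ε / 2) (δ / 2) ≠ 0 :=
      (lt_min (ENNReal.half_pos hε.ne') (ENNReal.half_pos hδ.ne')).ne'
    obtain ⟨m, hm⟩ := ENNReal.exists_inv_nat_lt hpos
    obtain ⟨y, hy, n, rfl⟩ := EMetric.dense_iff.1 (TopologicalSpace.denseRange_denseSeq Z) z
      (m : ENNReal)⁻¹ (by simp)
    have hmε := hm.le.trans (min_le_left _ _)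
    have hmδ := hm.le.trans (min_le_right _ _)
    rw [Metric.mem_eball] at hy
    refine ⟨_, ⟨n, m, rfl, ?_⟩, ?_, ?_⟩
    · calc 2 * (m : ENNReal)⁻¹ ≤ 2 * (ε / 2) := by gcongr
        _ = ε := ENNReal.mul_div_cancel (by simp) (by simp)
    · rw [Metric.mem_closedEBall, edist_comm]
      exact hy.le
    · intro w hw
      rw [Metric.mem_closedEBall] at hw ⊢
      calc edist w z ≤ _ := edist_triangle _ _ _
        _ ≤ δ / 2 + δ / 2 := add_le_add (hw.trans hmδ) (hy.le.trans hmδ)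
        _ = δ := ENNReal.add_halves δ
  have hLc : L.Countable := by
    refine (countable_range fun p : ℕ × ℕ =>
      Metric.closedEBall (TopologicalSpace.denseSeq Z p.1) (p.2 : ENNReal)⁻¹).mono ?_
    rintro s ⟨n, m, rfl, -⟩
    exact ⟨(n, m), rfl⟩
  have hLne : L.Nonempty := by
    obtain ⟨s, hs, -⟩ := hnear (Classical.arbitrary Z) 1 one_pos
    exact ⟨s, hs⟩
  obtain ⟨K, hK⟩ := hLc.exists_eq_range hLne
  refine ⟨K, fun n => ?_, fun z w hzw => ?_⟩
  · obtain ⟨i, m, h, hm⟩ : K n ∈ L := hK ▸ mem_range_self n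
    rw [h]
    exact ⟨Metric.isClosed_closedEBall, Metric.ediam_closedEBall_le.trans hm⟩
  · have hd : 0 < edist z w := edist_pos.2 hzw
    obtain ⟨δ, hδ, hδd⟩ : ∃ δ : ENNReal, 0 < δ ∧ δ + δ < edist z w := by
      obtain ⟨e, he, hed⟩ := exists_between hd
      exact ⟨e / 2, ENNReal.half_pos he.ne', by rwa [ENNReal.add_halves]⟩
    obtain ⟨s, hs, hzs, hsδ⟩ := hnear z δ hδ
    obtain ⟨t, ht, hwt, htδ⟩ := hnear w δ hδ
    rw [hK] at hs ht
    obtain ⟨i, rfl⟩ := hs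
    obtain ⟨j, rfl⟩ := ht
    refine ⟨i, j, hzs, hwt, disjoint_left.2 fun x hxs hxt => hδd.not_ge ?_⟩
    have h1 := hsδ hxs
    have h2 := htδ hxt
    rw [Metric.mem_closedEBall] at h1 h2
    calc edist z w ≤ edist z x + edist x w := edist_triangle _ _ _
      _ ≤ δ + δ := add_le_add (by rwa [edist_comm]) h2

theorem MeasureTheory.AnalyticSet.inter {X : Type*} [TopologicalSpace X] [T2Space X]
    {S T : Set X} (hS : AnalyticSet S) (hT : AnalyticSet T) : AnalyticSet (S ∩ T) := by
  rw [inter_eq_iInter]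
  exact AnalyticSet.iInter (by rintro (_ | _) <;> assumption)

section

variable {X Z : Type*} [TopologicalSpace X] [PolishSpace X] [MeasurableSpace X] [BorelSpace X]
  [MetricSpace Z] [CompleteSpace Z] [SecondCountableTopology Z]

theorem exists_disjoint_not_isRangeSmall {f : Z → X} (hf : Continuous f) {T : Set X}
    (hT : AnalyticSet T) {A : Set Z} (hA : IsClosed A) {ε : ENNReal} (hε : 0 < ε)
    (h : ¬ IsRangeSmall f (T ∩ f '' A)) :
    ∃ A' : Bool → Set Z, (∀ b, IsClosed (A' b) ∧ A' b ⊆ A ∧ Metric.ediam (A' b) ≤ ε) ∧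
      Disjoint (A' false) (A' true) ∧ ¬ IsRangeSmall f (T ∩ ⋂ b, f '' A' b) := by
  borelize Z
  obtain ⟨K, hK, hsep⟩ := exists_seq_isClosed_separating Z hε
  by_contra! hcon
  apply h
  have hB : ∀ i j, ∃ B, MeasurableSet B ∧ B ⊆ range f ∧
      (Disjoint (K i) (K j) → T ∩ (f '' (A ∩ K i) ∩ f '' (A ∩ K j)) ⊆ B) := by
    intro i j
    by_cases hij : Disjoint (K i) (K j)
    · obtain ⟨B, hB, hsub, hr⟩ := hcon (fun b => A ∩ K (bif b then j else i))
        (fun b => ⟨hA.inter (hK _).1, inter_subset_left,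
          (Metric.ediam_mono inter_subset_right).trans (hK _).2⟩)
        (hij.mono inter_subset_right inter_subset_right)
      refine ⟨B, hB, hr, fun _ => subset_trans ?_ hsub⟩
      rintro x ⟨hxT, hxi, hxj⟩
      refine ⟨hxT, mem_iInter.2 ?_⟩
      rintro (_ | _) <;> assumption
    · exact ⟨∅, .empty, empty_subset _, fun h => absurd h hij⟩
  choose B hBm hBr hB using hB
  let U := ⋃ i, ⋃ j, B i j
  have hU : MeasurableSet U := .iUnion fun i => .iUnion fun j => hBm i j
  have hC : ∀ i j, ∃ C, MeasurableSet C ∧ T ⊆ C ∧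
      (Disjoint (K i) (K j) → Disjoint ((f '' (A ∩ K i) ∩ f '' (A ∩ K j)) \ U) C) := by
    intro i j
    by_cases hij : Disjoint (K i) (K j)
    · have han : ∀ i, AnalyticSet (f '' (A ∩ K i)) := fun i =>
        (hA.inter (hK i).1).analyticSet.image_of_continuous hf
      obtain ⟨C, hTC, hdis, hCm⟩ := hT.measurablySeparable
        (((han i).inter (han j)).inter hU.compl.analyticSet) (by
          refine disjoint_left.2 fun x hxT hx => hx.2 ?_
          exact mem_iUnion₂.2 ⟨i, j, hB i j hij ⟨hxT, hx.1⟩⟩)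
      exact ⟨C, hCm, hTC, fun _ => hdis⟩
    · exact ⟨univ, .univ, subset_univ _, fun h => absurd h hij⟩
  choose C hCm hTC hC using hC
  let V := (⋂ i, ⋂ j, C i j) \ U
  have hV : MeasurableSet V := (MeasurableSet.iInter fun i => .iInter fun j => hCm i j).diff hU
  have hinj : InjOn f (A ∩ f ⁻¹' V) := by
    intro z hz w hw hzw
    by_contra hne
    obtain ⟨i, j, hzi, hwj, hij⟩ := hsep z w hne
    exact disjoint_left.1 (hC i j hij)
      ⟨⟨⟨z, ⟨hz.1, hzi⟩, rfl⟩, ⟨w, ⟨hw.1, hwj⟩, hzw.symm⟩⟩, hz.2.2⟩ (mem_iInter₂.1 hz.2.1 i j)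
  refine ⟨U ∪ f '' (A ∩ f ⁻¹' V), hU.union ?_, ?_, ?_⟩
  · exact (hA.measurableSet.inter (hf.measurable hV)).image_of_continuousOn_injOn
      hf.continuousOn hinj
  · rintro x ⟨hxT, z, hz, rfl⟩
    by_cases hxU : f z ∈ U
    · exact .inl hxU
    · exact .inr ⟨z, ⟨hz, mem_iInter₂.2 fun i j => hTC i j hxT, hxU⟩, rfl⟩
  · exact union_subset (iUnion₂_subset hBr) (image_subset_range _ _)

theorem exists_disjoint_not_isRangeSmall_finset {ι : Type*} {f : Z → X} (hf : Continuous f)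
    {ε : ENNReal} (hε : 0 < ε) {A : ι → Set Z} (s : Finset ι) (hA : ∀ i ∈ s, IsClosed (A i))
    {T : Set X} (hT : AnalyticSet T) (h : ¬ IsRangeSmall f (T ∩ ⋂ i ∈ s, f '' A i)) :
    ∃ A' : ι → Bool → Set Z,
      (∀ i ∈ s, (∀ b, IsClosed (A' i b) ∧ A' i b ⊆ A i ∧ Metric.ediam (A' i b) ≤ ε) ∧
        Disjoint (A' i false) (A' i true)) ∧
      ¬ IsRangeSmall f (T ∩ ⋂ i ∈ s, ⋂ b, f '' A' i b) := by
  classical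
  induction s using Finset.induction_on generalizing T with
  | empty => exact ⟨fun _ _ => ∅, by simp, by simpa using h⟩
  | insert a s ha ih =>
    have hAs : ∀ i ∈ s, IsClosed (A i) := fun i hi => hA i (Finset.mem_insert_of_mem hi)
    have hAa := hA a (Finset.mem_insert_self _ _)
    obtain ⟨A₁, hA₁, hs₁⟩ := ih hAs (T := T ∩ f '' A a)
      (hT.inter (hAa.analyticSet.image_of_continuous hf))
      (by rwa [Finset.set_biInter_insert, ← inter_assoc] at h)
    have han : AnalyticSet (T ∩ ⋂ i ∈ s, ⋂ b, f '' A₁ i b) := by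
      have : (T ∩ ⋂ i ∈ s, ⋂ b, f '' A₁ i b) =
          ⋂ o : Option s, o.elim T fun i => ⋂ b, f '' A₁ i b := by
        rw [iInter_option, iInter_subtype]
        rfl
      rw [this]
      refine AnalyticSet.iInter fun o => ?_
      cases o with
      | none => exact hT
      | some i => exact AnalyticSet.iInter fun b =>
          ((hA₁ i i.2).1 b).1.analyticSet.image_of_continuous hf
    obtain ⟨A₂, hA₂, hd, hs₂⟩ := exists_disjoint_not_isRangeSmall hf han hAa hε
      (by rwa [inter_right_comm])
    have hne : ∀ i ∈ s, Function.update A₁ a A₂ i = A₁ i := fun i hi =>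
      Function.update_of_ne (ne_of_mem_of_not_mem hi ha) _ _
    refine ⟨Function.update A₁ a A₂, ?_, ?_⟩
    · intro i hi
      rcases Finset.mem_insert.1 hi with rfl | hi
      · rw [Function.update_self]
        exact ⟨hA₂, hd⟩
      · rw [hne i hi]
        exact hA₁ i hi
    · rw [Finset.set_biInter_insert, Function.update_self,
        iInter₂_congr fun i hi => by rw [hne i hi], inter_left_comm, inter_comm]
      exact hs₂

/-- A continuous countable-to-one map on a Polish space has Borel range: otherwise, a Cantor scheme
of closed sets whose images have a common intersection that is not small at each level yields a
fiber containing an injective image of the Cantor space. -/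
theorem Continuous.measurableSet_range_of_countable_fibers {f : Z → X} (hf : Continuous f)
    (hc : ∀ x, (f ⁻¹' {x}).Countable) : MeasurableSet (range f) := by
  by_contra hmeas
  have hnil : ¬ IsRangeSmall f (range f) := fun ⟨B, hB, h₁, h₂⟩ =>
    hmeas (h₂.antisymm h₁ ▸ hB)
  let s : ℕ → Finset (List Bool) := fun n => (List.finite_length_eq Bool n).toFinset
  have hs : ∀ n l, l ∈ s n ↔ l.length = n := by simp [s]
  let P : ℕ → (List Bool → Set Z) → Prop := fun n A =>
    (∀ l ∈ s n, IsClosed (A l) ∧ Metric.ediam (A l) ≤ (n : ENNReal)⁻¹) ∧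
      ¬ IsRangeSmall f (⋂ l ∈ s n, f '' A l)
  let R : ℕ → (List Bool → Set Z) → (List Bool → Set Z) → Prop := fun n A A' =>
    ∀ l ∈ s n, (∀ b, A' (b :: l) ⊆ A l) ∧ Disjoint (A' (false :: l)) (A' (true :: l))
  have hstep : ∀ n A, P n A → ∃ A', P (n + 1) A' ∧ R n A A' := by
    intro n A hP
    obtain ⟨A', hA', hsm⟩ := exists_disjoint_not_isRangeSmall_finset hf
      (ε := ((n + 1 : ℕ) : ENNReal)⁻¹) (by simp) (s n) (fun l hl => (hP.1 l hl).1)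
      (T := univ) MeasurableSet.univ.analyticSet (by simpa using hP.2)
    refine ⟨fun l => A' l.tail (l.headD false), ⟨?_, ?_⟩, ?_⟩
    · rintro (_ | ⟨b, l⟩) hl
      · simp [hs] at hl
      · have hl : l ∈ s n := by simpa [hs] using hl
        exact ⟨((hA' l hl).1 b).1, ((hA' l hl).1 b).2.2⟩
    · convert hsm using 2
      ext x
      simp only [univ_inter, mem_iInter]
      constructor
      · intro h l hl b
        exact h (b :: l) (by simpa [hs] using hl)
      · rintro h (_ | ⟨b, l⟩) hl
        · simp [hs] at hl
        · exact h l (by simpa [hs] using hl) b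
    · exact fun l hl => ⟨fun b => ((hA' l hl).1 b).2.1, (hA' l hl).2⟩
  choose! next hnextP hnextR using hstep
  let A : ℕ → List Bool → Set Z := fun n => Nat.rec (fun _ => univ) next n
  have hP : ∀ n, P n (A n) := by
    intro n
    induction n with
    | zero =>
      refine ⟨by simp [A], ?_⟩
      have h0 : s 0 = {[]} := by
        ext l
        simp [hs]
      simpa [A, h0] using hnil
    | succ n ih => exact hnextP n _ ih
  have hR : ∀ n, R n (A n) (A (n + 1)) := fun n => hnextR n _ (hP n)
  let S : List Bool → Set Z := fun l => A l.length l
  have hne : ∀ n, (⋂ l ∈ s n, f '' A n l).Nonempty := by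
    intro n
    by_contra h
    refine (hP n).2 ⟨∅, .empty, ?_, empty_subset _⟩
    rw [not_nonempty_iff_eq_empty.1 h]
  choose x hx using hne
  have hxS : ∀ l, x l.length ∈ f '' S l := fun l =>
    mem_iInter₂.1 (hx l.length) l ((hs _ _).2 rfl)
  have hanti : CantorScheme.ClosureAntitone S :=
    CantorScheme.Antitone.closureAntitone
      (fun l b => (hR l.length l ((hs _ _).2 rfl)).1 b)
      (fun l => ((hP l.length).1 l ((hs _ _).2 rfl)).1)
  have hdisj : CantorScheme.Disjoint S := by
    intro l a b hab
    have h := (hR l.length l ((hs _ _).2 rfl)).2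
    cases a <;> cases b
    · exact absurd rfl hab
    · exact h
    · exact h.symm
    · exact absurd rfl hab
  have hdiam : CantorScheme.VanishingDiam S := by
    intro b
    refine tendsto_of_tendsto_of_tendsto_of_le_of_le tendsto_const_nhds
      ENNReal.tendsto_inv_nat_nhds_zero (fun _ => zero_le) fun n => ?_
    have h := ((hP (PiNat.res b n).length).1 _ ((hs _ _).2 rfl)).2
    have hlen : ((PiNat.res b n).length : ENNReal)⁻¹ = (n : ENNReal)⁻¹ := by
      rw [PiNat.res_length]
    exact h.trans hlen.le
  have hdom := CantorScheme.ClosureAntitone.map_of_vanishingDiam hdiam hanti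
    fun l => (hxS l).imp fun _ h => h.1
  let g : (ℕ → Bool) → Z := fun b => (CantorScheme.inducedMap S).2 ⟨b, hdom ▸ mem_univ b⟩
  have hg : Function.Injective g := fun b b' h => congrArg Subtype.val (hdisj.map_injective h)
  have hlim : ∀ b, Tendsto x atTop (𝓝 (f (g b))) := by
    intro b
    have hz : ∀ n, ∃ z ∈ S (PiNat.res b n), f z = x n := fun n => by
      simpa using hxS (PiNat.res b n)
    choose z hz hfz using hz
    have hzlim : Tendsto z atTop (𝓝 (g b)) := by
      rw [tendsto_iff_edist_tendsto_0]
      exact tendsto_of_tendsto_of_tendsto_of_le_of_le tendsto_const_nhds (hdiam b)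
        (fun _ => zero_le)
        fun n => Metric.edist_le_ediam_of_mem (hz n) (CantorScheme.map_mem _ n)
    simpa [Function.comp_def, hfz] using (hf.tendsto (g b)).comp hzlim
  have hcount : (range g).Countable := by
    refine (hc (f (g fun _ => false))).mono ?_
    rintro _ ⟨b, rfl⟩
    exact tendsto_nhds_unique (hlim b) (hlim _)
  have : Countable (ℕ → Bool) := by
    have := hcount.to_subtype
    exact (rangeFactorization_injective.2 hg).countable
  obtain ⟨e, he⟩ := exists_surjective_nat (ℕ → Bool)
  obtain ⟨n, hn⟩ := he fun i => !e i i
  simpa using congrFun hn n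

end

/-- The range of a countable-to-one Borel map between standard Borel spaces is Borel. -/
theorem Measurable.measurableSet_range_of_countable_fibers {X Z : Type*} [MeasurableSpace X]
    [StandardBorelSpace X] [MeasurableSpace Z] [StandardBorelSpace Z] {f : Z → X}
    (hf : Measurable f) (hc : ∀ x, (f ⁻¹' {x}).Countable) : MeasurableSet (range f) := by
  let _ := upgradeStandardBorel X
  let _ := upgradeStandardBorel Z
  obtain ⟨t, -, hcont, ht⟩ := hf.exists_continuous
  let _ := t
  let _ := TopologicalSpace.upgradeIsCompletelyMetrizable Z
  exact Continuous.measurableSet_range_of_countable_fibers hcont hc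

theorem measurableSet_inNeighbors {X : Type*} [MeasurableSpace X] [StandardBorelSpace X]
    {D : Set (X × X)} (hD : MeasurableSet D) (hc : ∀ x, {y | (x, y) ∈ D}.Countable)
    {B : Set X} (hB : MeasurableSet B) : MeasurableSet {x | ∃ y ∈ B, (x, y) ∈ D} := by
  have hE : MeasurableSet (D ∩ Prod.snd ⁻¹' B) := hD.inter (measurable_snd hB)
  have := hE.standardBorel
  let f : ↥(D ∩ Prod.snd ⁻¹' B) → X := fun p => p.1.1
  have hf : Measurable f := measurable_fst.comp measurable_subtype_coe
  have hrange : {x | ∃ y ∈ B, (x, y) ∈ D} = range f := by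
    ext x
    constructor
    · rintro ⟨y, hy, hxy⟩
      exact ⟨⟨(x, y), hxy, hy⟩, rfl⟩
    · rintro ⟨⟨⟨x, y⟩, hxy, hy⟩, rfl⟩
      exact ⟨y, hy, hxy⟩
  rw [hrange]
  refine hf.measurableSet_range_of_countable_fibers fun x => ?_
  refine MapsTo.countable_of_injOn (f := fun p => p.1.2) (t := {y | (x, y) ∈ D}) ?_ ?_ (hc x)
  · rintro ⟨⟨x, y⟩, hxy, hy⟩ rfl
    exact hxy
  · rintro ⟨⟨x, y⟩, hxy, hy⟩ rfl ⟨⟨x', y'⟩, hxy', hy'⟩ h hyy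
    obtain rfl : x' = x := h
    obtain rfl : y = y' := hyy
    rfl

theorem exists_quasiKernel_of_coloring {X : Type*} [MeasurableSpace X] {D : Set (X × X)}
    (hN : ∀ B, MeasurableSet B → MeasurableSet {x | ∃ y ∈ B, (x, y) ∈ D})
    {c : X → ℕ} (hcm : Measurable c) (hc : ∀ x y, (x, y) ∈ D → c x ≠ c y) (k : ℕ)
    {Y : Set X} (hY : MeasurableSet Y) (hYk : ∀ x ∈ Y, c x < k) :
    ∃ M ⊆ Y, MeasurableSet M ∧ (∀ x ∈ M, ∀ y ∈ M, (x, y) ∉ D) ∧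
      ∀ x ∈ Y, x ∈ M ∨ (∃ y ∈ M, (x, y) ∈ D) ∨
        ∃ y z : X, (x, y) ∈ D ∧ (y, z) ∈ D ∧ z ∈ M := by
  induction k generalizing Y with
  | zero => exact ⟨∅, empty_subset _, .empty, by simp, fun x hx => absurd (hYk x hx) (by simp)⟩
  | succ k ih =>
    let C := Y ∩ c ⁻¹' {k}
    have hCm : MeasurableSet C := hY.inter (hcm (measurableSet_singleton k))
    obtain ⟨M, hMY, hMm, hMi, hM⟩ := ih
      (Y := Y \ (C ∪ {x | ∃ y ∈ C, (x, y) ∈ D})) (hY.diff (hCm.union (hN C hCm))) (by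
        rintro x ⟨hxY, hx⟩
        have h₁ := hYk x hxY
        have h₂ : c x ≠ k := fun h => hx (.inl ⟨hxY, h⟩)
        omega)
    have hC : ∀ x ∈ C, x ∈ M ∪ (C \ {x | ∃ y ∈ M, (x, y) ∈ D}) ∨ ∃ y ∈ M, (x, y) ∈ D := by
      intro x hx
      by_cases h : ∃ y ∈ M, (x, y) ∈ D
      · exact .inr h
      · exact .inl (.inr ⟨hx, h⟩)
    refine ⟨M ∪ (C \ {x | ∃ y ∈ M, (x, y) ∈ D}), ?_, hMm.union (hCm.diff (hN M hMm)), ?_, ?_⟩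
    · exact union_subset (hMY.trans sdiff_subset) (sdiff_subset.trans inter_subset_left)
    · rintro x (hx | hx) y (hy | hy) hxy
      · exact hMi x hx y hy hxy
      · exact (hMY hx).2 (.inr ⟨y, hy.1, hxy⟩)
      · exact hx.2 ⟨y, hy, hxy⟩
      · exact hc x y hxy (hx.1.2.trans hy.1.2.symm)
    · intro x hx
      by_cases hxC : x ∈ C
      · exact (hC x hxC).imp_right fun ⟨y, hy, hxy⟩ => .inl ⟨y, .inl hy, hxy⟩
      by_cases hxN : ∃ y ∈ C, (x, y) ∈ D
      · obtain ⟨y, hyC, hxy⟩ := hxN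
        rcases hC y hyC with hy | ⟨z, hz, hyz⟩
        · exact .inr (.inl ⟨y, hy, hxy⟩)
        · exact .inr (.inr ⟨y, z, hxy, hyz, .inl hz⟩)
      · rcases hM x ⟨hx, not_or.2 ⟨hxC, hxN⟩⟩ with h | ⟨y, hy, hxy⟩ | ⟨y, z, hxy, hyz, hz⟩
        · exact .inl (.inl h)
        · exact .inr (.inl ⟨y, .inl hy, hxy⟩)
        · exact .inr (.inr ⟨y, z, hxy, hyz, .inl hz⟩)


/-- **Theorem (Borel quasi-kernel).** Let `X` be a standard Borel space and `D` a locally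
countable Borel directed graph on `X` whose underlying graph has finite Borel chromatic
number. Then there is a Borel quasi-kernel in `D`: a Borel set `M` that is independent in
the underlying graph of `D` and such that every vertex has directed distance at most `2`
to `M`. -/
theorem borel_quasi_kernel {X : Type*} [MeasurableSpace X] [StandardBorelSpace X]
    (D : Set (X × X)) (hDmeas : MeasurableSet D)
    (hirr : ∀ x : X, (x, x) ∉ D)
    (hloc : ∀ x : X, {y | (x, y) ∈ D}.Countable ∧ {y | (y, x) ∈ D}.Countable)
    (hchrom : ∃ k : ℕ, ∃ c : X → Fin k, Measurable c ∧
      ∀ x y : X, ((x, y) ∈ D ∨ (y, x) ∈ D) → c x ≠ c y) :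
    ∃ M : Set X, MeasurableSet M ∧
      (∀ x ∈ M, ∀ y ∈ M, (x, y) ∉ D) ∧
      (∀ x : X, x ∈ M ∨ (∃ y ∈ M, (x, y) ∈ D) ∨
        ∃ y z : X, (x, y) ∈ D ∧ (y, z) ∈ D ∧ z ∈ M) := by
  obtain ⟨k, c, hcm, hc⟩ := hchrom
  obtain ⟨M, -, hMm, hMi, hM⟩ := exists_quasiKernel_of_coloring
    (fun B hB => measurableSet_inNeighbors hDmeas (fun x => (hloc x).1) hB)
    (c := fun x => (c x : ℕ)) ((measurable_of_countable _).comp hcm)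
    (fun x y hxy h => hc x y (.inl hxy) (Fin.ext h)) k MeasurableSet.univ (fun x _ => (c x).2)
  exact ⟨M, hMm, hMi, fun x => hM x (mem_univ x)⟩
end

section
/- Let X be a standard Borel space and f : X → X a Borel function such that every point of X has at most 2 preimages under f (f is 2-to-1). Then the underlying graph of the directed graph D_f generated by f admits a Borel proper edge coloring with 4 colors: there is a Borel map assigning to each edge of the underlying graph one of 4 colors so that any two distinct edges sharing a vertex receive different colors. -/
open Set Function

section TwoToOneColoring

lemma frequently_mem_iterate_apply_iff {X : Type*} {f : X → X} {A : Set X} (x : X) :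
    (∀ N, ∃ n ≥ N, f^[n] (f x) ∈ A) ↔ ∀ N, ∃ n ≥ N, f^[n] x ∈ A := by
  constructor
  · intro h N
    obtain ⟨n, hn, hA⟩ := h N
    exact ⟨n + 1, by omega, hA⟩
  · intro h N
    obtain ⟨n, hn, hA⟩ := h (N + 1)
    obtain ⟨m, rfl⟩ : ∃ m, n = m + 1 := ⟨n - 1, by omega⟩
    exact ⟨m, by omega, hA⟩

variable {X : Type*} [MeasurableSpace X] {f : X → X}

/-- A function all of whose fibres have at most two points admits a Borel two-labelling that
separates the points of each fibre. -/
lemma exists_measurable_label_of_two_to_one [StandardBorelSpace X] (hf : Measurable f)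
    (h2to1 : ∀ y : X, ∃ a b : X, ∀ x : X, f x = y → x = a ∨ x = b) :
    ∃ l : X → Bool, Measurable l ∧ ∀ x y, f x = f y → l x = l y → x = y := by
  classical
  let φ := MeasureTheory.embeddingReal X
  have hφ : MeasurableEmbedding φ := MeasureTheory.measurableEmbedding_embeddingReal X
  let E : Set (X × X) := {p | f p.1 = f p.2 ∧ φ p.2 < φ p.1}
  have hE : MeasurableSet E := by
    refine MeasurableSet.inter ?_ ?_
    · exact measurableSet_eq_fun (hf.comp measurable_fst) (hf.comp measurable_snd)
    · exact measurableSet_lt (hφ.measurable.comp measurable_snd)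
        (hφ.measurable.comp measurable_fst)
  have three : ∀ x y z, f x = f y → f y = f z → φ x < φ y → φ y < φ z → False := by
    intro x y z hxy hyz h₁ h₂
    obtain ⟨a, b, hab⟩ := h2to1 (f z)
    have hx := hab x (hxy.trans hyz)
    have hy := hab y hyz
    have hz := hab z rfl
    have : x ≠ y := by rintro rfl; exact lt_irrefl _ h₁
    have : y ≠ z := by rintro rfl; exact lt_irrefl _ h₂
    have : x ≠ z := by rintro rfl; exact lt_asymm h₁ h₂
    grind
  have hinj : InjOn Prod.fst E := by
    rintro ⟨x, y⟩ ⟨h₁, h₂⟩ ⟨x', z⟩ ⟨h₃, h₄⟩ (rfl : x = x')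
    simp only at h₁ h₂ h₃ h₄
    rcases lt_trichotomy (φ y) (φ z) with h | h | h
    · exact (three y z x (h₁.symm.trans h₃) h₃.symm h h₄).elim
    · rw [hφ.injective h]
    · exact (three z y x (h₃.symm.trans h₁) h₁.symm h h₂).elim
  have hA : MeasurableSet (Prod.fst '' E) := hE.image_of_measurable_injOn measurable_fst hinj
  have mem_iff : ∀ x, x ∈ Prod.fst '' E ↔ ∃ y, f x = f y ∧ φ y < φ x := by
    intro x
    constructor
    · rintro ⟨⟨x, y⟩, h, rfl⟩
      exact ⟨y, h⟩
    · rintro ⟨y, h⟩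
      exact ⟨(x, y), h, rfl⟩
  refine ⟨fun x => decide (x ∈ Prod.fst '' E), measurable_to_bool ?_, ?_⟩
  · convert hA using 1
    ext x
    simp only [mem_preimage, mem_singleton_iff, decide_eq_true_eq]
  · have key : ∀ x y, f x = f y → φ x < φ y →
        ¬ (x ∈ Prod.fst '' E ↔ y ∈ Prod.fst '' E) := by
      intro x y hxy hlt h
      obtain ⟨z, hz, hzx⟩ := (mem_iff x).1 (h.2 ((mem_iff y).2 ⟨x, hxy.symm, hlt⟩))
      exact three z x y hz.symm hxy hzx hlt
    intro x y hxy hl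
    have hl' : x ∈ Prod.fst '' E ↔ y ∈ Prod.fst '' E := by simpa only [decide_eq_decide] using hl
    rcases lt_trichotomy (φ x) (φ y) with h | h | h
    · exact (key x y hxy h hl').elim
    · exact hφ.injective h
    · exact (key y x hxy.symm h hl'.symm).elim

/-- The graph generated by a Borel function has a countable Borel proper coloring. -/
lemma exists_measurable_nat_coloring [MeasurableSpace.CountablySeparated X] (hf : Measurable f) :
    ∃ k : X → ℕ, Measurable k ∧ ∀ x, f x ≠ x → k (f x) ≠ k x := by
  classical
  obtain ⟨g, hg, hinj⟩ := MeasurableSpace.measurable_injection_nat_bool_of_countablySeparated X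
  have hgn : ∀ n, Measurable fun x => g x n := fun n => (measurable_pi_apply n).comp hg
  let p : X → ℕ → Prop := fun x n => f x = x ∨ g x n ≠ g (f x) n
  have hp : ∀ x, ∃ n, p x n := by
    intro x
    by_cases h : f x = x
    · exact ⟨0, Or.inl h⟩
    · obtain ⟨n, hn⟩ := Function.ne_iff.1 (fun h' => h (hinj h').symm : g x ≠ g (f x))
      exact ⟨n, Or.inr hn⟩
  have hpm : ∀ n, MeasurableSet {x | p x n} := by
    intro n
    have h₁ : MeasurableSet {x | f x = x} := by
      have : {x | f x = x} = ⋂ n, {x | g (f x) n = g x n} := by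
        ext x
        simp only [mem_ofPred_eq, mem_iInter]
        exact ⟨fun h n => by rw [h], fun h => hinj (funext h)⟩
      rw [this]
      exact .iInter fun n => measurableSet_eq_fun ((hgn n).comp hf) (hgn n)
    exact h₁.union (measurableSet_eq_fun (hgn n) ((hgn n).comp hf)).compl
  have hN : Measurable fun x => Nat.find (hp x) := measurable_find hp hpm
  have hbit : Measurable fun x => g x (Nat.find (hp x)) :=
    (measurable_from_prod_countable_left (f := fun q : X × ℕ => g q.1 q.2) hgn).comp
      (measurable_id.prodMk hN)
  refine ⟨fun x => Nat.bit (g x (Nat.find (hp x))) (Nat.find (hp x)),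
    (Measurable.of_discrete (f := fun q : Bool × ℕ => Nat.bit q.1 q.2)).comp (hbit.prodMk hN), ?_⟩
  intro x hx h
  have hb := congrArg Nat.bodd h
  have hn := congrArg Nat.div2 h
  simp only [Nat.bodd_bit, Nat.div2_bit] at hb hn
  rw [hn] at hb
  rcases Nat.find_spec (hp x) with h' | h'
  · exact hx h'
  · exact h' hb.symm

lemma measurableSet_frequently_mem_iterate (hf : Measurable f) {A : Set X}
    (hA : MeasurableSet A) : MeasurableSet {x | ∀ N, ∃ n ≥ N, f^[n] x ∈ A} := by
  have : {x | ∀ N, ∃ n ≥ N, f^[n] x ∈ A} = ⋂ N, ⋃ n, ⋃ (_ : n ≥ N), f^[n] ⁻¹' A := by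
    ext x; simp
  rw [this]
  exact .iInter fun N => .iUnion fun n => .iUnion fun _ => (hf.iterate n) hA

/-- Two Borel independent sets can be amalgamated into one that meets every forward orbit
which meets the first infinitely often or meets the second. -/
lemma exists_independent_amalgam (hf : Measurable f) {A B : Set X} (hA : MeasurableSet A)
    (hB : MeasurableSet B) (hAi : ∀ x ∈ A, f x ∉ A) (hBi : ∀ x ∈ B, f x ∉ B) :
    ∃ C : Set X, MeasurableSet C ∧ (∀ x ∈ C, f x ∉ C) ∧
      ∀ x, ((∀ N, ∃ n ≥ N, f^[n] x ∈ A) ∨ ∃ n, f^[n] x ∈ B) → ∃ n, f^[n] x ∈ C := by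
  let I : Set X := {x | ∀ N, ∃ n ≥ N, f^[n] x ∈ A}
  have hI : MeasurableSet I := measurableSet_frequently_mem_iterate hf hA
  have hIf : ∀ x, f x ∈ I ↔ x ∈ I := frequently_mem_iterate_apply_iff
  have hIn : ∀ n x, f^[n] x ∈ I ↔ x ∈ I := by
    intro n
    induction n with
    | zero => simp
    | succ n ih => intro x; rw [iterate_succ_apply, ih, hIf]
  refine ⟨(A ∩ I) ∪ (B \ I), (hA.inter hI).union (hB.diff hI), ?_, ?_⟩
  · rintro x (⟨hx, hxI⟩ | ⟨hx, hxI⟩) (⟨hy, hyI⟩ | ⟨hy, hyI⟩)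
    · exact hAi x hx hy
    · exact hyI ((hIf x).2 hxI)
    · exact hxI ((hIf x).1 hyI)
    · exact hBi x hx hy
  · intro x hx
    by_cases hxI : x ∈ I
    · obtain ⟨n, -, hn⟩ := hxI 0
      exact ⟨n, Or.inl ⟨hn, (hIn n x).2 hxI⟩⟩
    · obtain ⟨n, hn⟩ := hx.resolve_left hxI
      exact ⟨n, Or.inr ⟨hn, fun h => hxI ((hIn n x).1 h)⟩⟩

/-- If `f` is injective on a forward invariant Borel set on which every backward orbit is finite,
then the parity of the length of the backward orbit cuts this set in two independent halves. -/
lemma exists_independent_of_injOn [StandardBorelSpace X] (hf : Measurable f) {V : Set X}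
    (hV : MeasurableSet V) (hmaps : MapsTo f V V) (hinj : InjOn f V) {k : X → ℕ}
    (hk : ∀ x ∈ V, k x < k (f x)) :
    ∃ E : Set X, MeasurableSet E ∧ (∀ x ∈ E, f x ∉ E) ∧ ∀ x ∈ V, x ∈ E ∨ f x ∈ E := by
  classical
  have hmapsn : ∀ n, MapsTo f^[n] V V := fun n => hmaps.iterate n
  have hinjn : ∀ n, InjOn f^[n] V := fun n => hinj.iterate hmaps n
  have himg : ∀ n, MeasurableSet (f^[n] '' V) := fun n =>
    hV.image_of_measurable_injOn (hf.iterate n) (hinjn n)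
  have hkn : ∀ n, ∀ x ∈ V, n ≤ k (f^[n] x) := by
    intro n x hx
    induction n with
    | zero => simp
    | succ n ih =>
      rw [iterate_succ_apply']
      exact ih.trans_lt (hk _ (hmapsn n hx))
  have hex : ∀ x, ∃ n, x ∉ f^[n] '' V := by
    intro x
    refine ⟨k x + 1, ?_⟩
    rintro ⟨y, hy, h⟩
    have := hkn (k x + 1) y hy
    rw [h] at this
    omega
  let h : X → ℕ := fun x => Nat.find (hex x)
  have hh : Measurable h := measurable_find hex fun n => (himg n).compl
  have hsucc : ∀ x ∈ V, h (f x) = h x + 1 := by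
    intro x hx
    have hstep : ∀ n, f x ∉ f^[n + 1] '' V ↔ x ∉ f^[n] '' V := by
      intro n
      refine not_congr ⟨?_, ?_⟩
      · rintro ⟨y, hy, hxy⟩
        rw [iterate_succ_apply'] at hxy
        exact ⟨y, hy, hinj (hmapsn n hy) hx hxy⟩
      · rintro ⟨y, hy, rfl⟩
        exact ⟨y, hy, iterate_succ_apply' f n y⟩
    refine (Nat.find_eq_iff _).2 ⟨(hstep _).2 (Nat.find_spec (hex x)), ?_⟩
    rintro (_ | n) hn
    · simpa using hmaps hx
    · rw [hstep]
      exact Nat.find_min (hex x) (by simpa [h] using hn)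
  refine ⟨V ∩ h ⁻¹' {n | Even n}, hV.inter (hh (MeasurableSet.of_discrete)), ?_, ?_⟩
  · rintro x ⟨hx, hev⟩ ⟨-, hev'⟩
    simp only [mem_preimage, mem_ofPred_eq, hsucc x hx] at hev hev'
    exact Nat.even_add_one.1 hev' hev
  · intro x hx
    by_cases hev : Even (h x)
    · exact Or.inl ⟨hx, hev⟩
    · exact Or.inr ⟨hmaps hx, by simpa [hsucc x hx] using Nat.even_add_one.2 hev⟩

/-- A two-to-one Borel function has a Borel independent set which meets every forward orbit that
does not end in a cycle of length at most two. -/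
lemma exists_independent_forward_recurrent [StandardBorelSpace X] (hf : Measurable f)
    {l : X → Bool} (hl : Measurable l) (hlf : ∀ x y, f x = f y → l x = l y → x = y) :
    ∃ S : Set X, MeasurableSet S ∧ (∀ x ∈ S, f x ∉ S) ∧ (∀ x ∈ S, f (f x) ≠ x) ∧
      ∀ x, (∀ n, f (f (f^[n] x)) ≠ f^[n] x) → ∃ n, f^[n] x ∈ S := by
  obtain ⟨k, hk, hkf⟩ := exists_measurable_nat_coloring hf
  have hfn := hf.iterate
  let A₁ : Set X := {x | k (f x) < k x ∧ k (f x) < k (f (f x))}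
  have hA₁ : MeasurableSet A₁ :=
    (measurableSet_lt (hk.comp hf) hk).inter
      (measurableSet_lt (hk.comp hf) (hk.comp (hf.comp hf)))
  let A₂ : Set X := {x | l x = false ∧ l (f x) = true}
  have hA₂ : MeasurableSet A₂ :=
    (hl (measurableSet_singleton false)).inter ((hl.comp hf) (measurableSet_singleton true))
  let V : Set X := {x | ∀ n, k (f^[n] x) < k (f^[n + 1] x) ∧ l (f^[n] x) = l x}
  have hV : MeasurableSet V := by
    have : V = ⋂ n, ({x | k (f^[n] x) < k (f^[n + 1] x)} ∩ {x | l (f^[n] x) = l x}) := by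
      ext x; simp [V]
    rw [this]
    exact .iInter fun n => (measurableSet_lt (hk.comp (hfn n)) (hk.comp (hfn (n + 1)))).inter
      (measurableSet_eq_fun (hl.comp (hfn n)) hl)
  have hVmaps : MapsTo f V V := by
    intro x hx n
    exact ⟨(hx (n + 1)).1, (hx (n + 1)).2.trans (hx 1).2.symm⟩
  have hVinj : InjOn f V := by
    intro x hx y hy h
    refine hlf x y h ?_
    have h₁ : l (f x) = l x := (hx 1).2
    have h₂ : l (f y) = l y := (hy 1).2
    rw [← h₁, ← h₂, h]
  obtain ⟨A₃, hA₃, hA₃i, hA₃V⟩ :=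
    exists_independent_of_injOn hf hV hVmaps hVinj (k := k) fun x hx => (hx 0).1
  obtain ⟨B, hB, hBi, hBx⟩ := exists_independent_amalgam hf hA₂ hA₃
    (fun x hx hy => Bool.false_ne_true (hy.1.symm.trans hx.2)) hA₃i
  obtain ⟨C, hC, hCi, hCx⟩ := exists_independent_amalgam hf hA₁ hB
    (fun x hx hy => lt_asymm hx.2 hy.1) hBi
  have hP : MeasurableSet {x | f (f x) ≠ x} :=
    (measurableSet_eq_fun (hf.comp hf) measurable_id).compl
  refine ⟨C ∩ {x | f (f x) ≠ x}, hC.inter hP, fun x hx hy => hCi x hx.1 hy.1,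
    fun x hx => hx.2, ?_⟩
  intro x hx
  suffices ∃ n, f^[n] x ∈ C by
    obtain ⟨n, hn⟩ := this
    exact ⟨n, hn, hx n⟩
  refine hCx x (or_iff_not_imp_left.2 fun h₁ => hBx x (or_iff_not_imp_left.2 fun h₂ => ?_))
  push Not at h₁ h₂
  obtain ⟨N₁, h₁⟩ := h₁
  obtain ⟨N₂, h₂⟩ := h₂
  have hne : ∀ n, k (f^[n + 1] x) ≠ k (f^[n] x) := by
    intro n
    rw [iterate_succ_apply']
    exact hkf _ fun h => hx n (by rw [h, h])
  have hasc : ∀ n ≥ N₁, k (f^[n] x) < k (f^[n + 1] x) := by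
    intro n hn
    by_contra hcon
    have hdesc : ∀ m, k (f^[n + m + 1] x) < k (f^[n + m] x) := by
      intro m
      induction m with
      | zero => exact lt_of_le_of_ne (not_lt.1 hcon) (hne n)
      | succ m ih =>
        refine lt_of_le_of_ne (not_lt.1 fun hlt => h₁ (n + m) (by omega) ?_) (hne (n + m + 1))
        simp only [iterate_succ_apply'] at ih hlt
        exact ⟨ih, by simpa only [← add_assoc, iterate_succ_apply'] using hlt⟩
    have hbound : ∀ m, k (f^[n + m] x) + m ≤ k (f^[n] x) := by
      intro m
      induction m with
      | zero => simp
      | succ m ih =>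
        have := hdesc m
        rw [← add_assoc n m 1]
        omega
    have h₃ := hbound (k (f^[n] x) + 1)
    omega
  have hfalse : ∀ n ≥ N₂, l (f^[n] x) = false → l (f^[n + 1] x) = false := by
    intro n hn h
    by_contra h'
    rw [iterate_succ_apply'] at h'
    exact h₂ n hn ⟨h, by simpa using h'⟩
  obtain ⟨N, hN, hconst⟩ : ∃ N ≥ N₁, ∀ n ≥ N, l (f^[n] x) = l (f^[N] x) := by
    by_cases h : ∃ N ≥ max N₁ N₂, l (f^[N] x) = false
    · obtain ⟨N, hN, hlN⟩ := h
      refine ⟨N, (le_max_left _ _).trans hN, fun n hn => ?_⟩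
      rw [hlN]
      induction n, hn using Nat.le_induction with
      | base => exact hlN
      | succ n hn ih => exact hfalse n (((le_max_right _ _).trans hN).trans hn) ih
    · push Not at h
      refine ⟨max N₁ N₂, le_max_left _ _, fun n hn => ?_⟩
      have h₃ := h n hn
      have h₄ := h _ le_rfl
      simp only [ne_eq, Bool.not_eq_false] at h₃ h₄
      rw [h₃, h₄]
  have hmem : f^[N] x ∈ V := by
    intro n
    simp only [← iterate_add_apply]
    refine ⟨?_, hconst _ (by omega)⟩
    have := hasc (n + N) (by omega)
    rwa [add_right_comm] at this
  rcases hA₃V _ hmem with h | h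
  · exact ⟨N, h⟩
  · exact ⟨N + 1, by rwa [iterate_succ_apply']⟩

/-- Borel recursion along forward orbits, started at a Borel set that meets all of them. -/
lemma exists_measurable_forward_recursion {α : Type*} [MeasurableSpace α] (hf : Measurable f)
    {R : Set X} (hR : MeasurableSet R) (hRx : ∀ x, ∃ n, f^[n] x ∈ R) {r : X → α}
    (hr : Measurable r) {F : X × α → α} (hF : Measurable F) :
    ∃ c : X → α, Measurable c ∧ (∀ x ∈ R, c x = r x) ∧ ∀ x ∉ R, c x = F (x, c (f x)) := by
  classical
  let a : ℕ → X → α := fun n =>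
    n.rec r fun _ b x => F (x, b (f x))
  have ha : ∀ n, Measurable (a n) := by
    intro n
    induction n with
    | zero => exact hr
    | succ n ih => exact hF.comp (measurable_id.prodMk (ih.comp hf))
  have hN : Measurable fun x => Nat.find (hRx x) := measurable_find hRx fun n => (hf.iterate n) hR
  refine ⟨fun x => a (Nat.find (hRx x)) x,
    (measurable_from_prod_countable_left (f := fun q : X × ℕ => a q.2 q.1) ha).comp
      (measurable_id.prodMk hN), ?_, ?_⟩
  · intro x hx
    have : Nat.find (hRx x) = 0 := (Nat.find_eq_zero _).2 hx
    simp only [this]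
    rfl
  · intro x hx
    have : Nat.find (hRx x) = Nat.find (hRx (f x)) + 1 := Nat.find_comp_succ (hRx x) (hRx (f x)) hx
    simp only [this]
    rfl

/-- Two colors, selected by a label, for the edges entering the source of an edge of color `a`. -/
def freshColor (a : Fin 4) : Bool → Fin 4
  | false => if a = 0 then 1 else 0
  | true => if a = 0 ∨ a = 1 then 2 else 1

/-- Variant of `freshColor` producing colors outside `{0, 1}` and outside `{0, 2}` for the two
labels, respectively. -/
def transitionColor (a : Fin 4) : Bool → Fin 4
  | false => if a = 2 then 3 else 2
  | true => if a = 1 then 3 else 1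

/-- The colors restarting the construction above edges colored by `transitionColor`: the first
label selects a color from the pair determined by the second label. -/
def restartColor : Bool → Bool → Fin 4
  | false, _ => 0
  | true, false => 1
  | true, true => 2

lemma freshColor_ne (a : Fin 4) (b : Bool) : freshColor a b ≠ a := by
  revert a b; decide

lemma freshColor_injective (a : Fin 4) : Injective (freshColor a) := by
  revert a; unfold Injective; decide

lemma transitionColor_ne (a : Fin 4) (b : Bool) : transitionColor a b ≠ a := by
  revert a b; decide

lemma transitionColor_injective (a : Fin 4) : Injective (transitionColor a) := by
  revert a; unfold Injective; decide

lemma restartColor_ne_transitionColor (a : Fin 4) (b b' : Bool) :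
    restartColor b b' ≠ transitionColor a b' := by
  revert a b b'; decide

lemma restartColor_left_injective (b' : Bool) : Injective fun b => restartColor b b' := by
  revert b'; unfold Injective; decide

/-- Coloring of the edges `{x, f x}`, indexed by their sources. -/
lemma exists_measurable_source_coloring [StandardBorelSpace X] (hf : Measurable f)
    (h2to1 : ∀ y : X, ∃ a b : X, ∀ x : X, f x = y → x = a ∨ x = b) :
    ∃ c : X → Fin 4, Measurable c ∧ (∀ x, f (f x) = x → c (f x) = c x) ∧
      (∀ x, f (f x) ≠ x → c x ≠ c (f x)) ∧ ∀ x y, x ≠ y → f x = f y → c x ≠ c y := by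
  classical
  obtain ⟨l, hl, hlf⟩ := exists_measurable_label_of_two_to_one hf h2to1
  obtain ⟨S, hS, hSi, hSp, hSx⟩ := exists_independent_forward_recurrent hf hl hlf
  let P : Set X := {x | f (f x) = x}
  have hP : MeasurableSet P := measurableSet_eq_fun (hf.comp hf) measurable_id
  have hPf : ∀ x ∈ P, f x ∈ P := fun x hx => congrArg f hx
  have hff : Measurable fun x => f (f x) := hf.comp hf
  let R : Set X := {x | x ∈ P ∨ f x ∈ P ∨ f (f x) ∈ S}
  have hR : MeasurableSet R := hP.union ((hf hP).union (hff hS))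
  have hRx : ∀ x, ∃ n, f^[n] x ∈ R := by
    intro x
    by_cases h : ∃ n, f^[n] x ∈ P
    · obtain ⟨n, hn⟩ := h
      exact ⟨n, Or.inl hn⟩
    · push Not at h
      obtain ⟨n, hn⟩ := hSx (f (f x)) fun n => h (n + 2)
      refine ⟨n, Or.inr (Or.inr ?_)⟩
      rwa [← iterate_succ_apply' f, ← iterate_succ_apply' f]
  let r : X → Fin 4 := fun x =>
    if x ∈ P then 0 else if f x ∈ P then 1 else restartColor (l x) (l (f x))
  have hr : Measurable r := by
    refine Measurable.ite hP measurable_const (Measurable.ite (hf hP) measurable_const ?_)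
    exact (Measurable.of_discrete (f := fun q : Bool × Bool => restartColor q.1 q.2)).comp
      (hl.prodMk (hl.comp hf))
  let F : X × Fin 4 → Fin 4 := fun q =>
    if f q.1 ∈ S then transitionColor q.2 (l q.1) else freshColor q.2 (l q.1)
  have hF : Measurable F := by
    have h : Measurable fun q : X × Fin 4 => (q.2, l q.1) :=
      measurable_snd.prodMk (hl.comp measurable_fst)
    refine Measurable.ite ((hf.comp measurable_fst) hS) ?_ ?_
    · exact (Measurable.of_discrete (f := fun q : Fin 4 × Bool => transitionColor q.1 q.2)).comp h
    · exact (Measurable.of_discrete (f := fun q : Fin 4 × Bool => freshColor q.1 q.2)).comp h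
  obtain ⟨c, hc, hcR, hcF⟩ := exists_measurable_forward_recursion hf hR hRx hr hF
  have c_of_mem : ∀ x ∈ P, c x = 0 := fun x hx => by simp [hcR x (Or.inl hx), r, hx]
  have c_of_apply_mem : ∀ x ∉ P, f x ∈ P → c x = 1 := fun x hx hfx => by
    simp [hcR x (Or.inr (Or.inl hfx)), r, hx, hfx]
  have c_restart : ∀ x, f x ∉ P → f (f x) ∈ S → c x = restartColor (l x) (l (f x)) :=
    fun x hfx hS => by
      have hx : x ∉ P := fun h => hfx (hPf x h)
      simp [hcR x (Or.inr (Or.inr hS)), r, hx, hfx]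
  have c_step : ∀ x, f x ∉ P → f (f x) ∉ S → c x = F (x, c (f x)) := by
    intro x hfx hS
    refine hcF x ?_
    rintro (h | h | h)
    · exact hfx (hPf x h)
    · exact hfx h
    · exact hS h
  refine ⟨c, hc, fun x hx => ?_, fun x hx => ?_, fun x y hxy hfxy => ?_⟩
  · rw [c_of_mem x hx, c_of_mem _ (hPf x hx)]
  · by_cases hfx : f x ∈ P
    · rw [c_of_apply_mem x hx hfx, c_of_mem _ hfx]
      decide
    by_cases hffx : f (f x) ∈ S
    · rw [c_restart x hfx hffx, c_step (f x) (hSp _ hffx) (hSi _ hffx)]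
      simp only [F, hffx, if_true]
      exact restartColor_ne_transitionColor _ _ _
    · rw [c_step x hfx hffx]
      simp only [F]
      split_ifs
      · exact transitionColor_ne _ _
      · exact freshColor_ne _ _
  · have hlxy : l x ≠ l y := fun h => hxy (hlf x y hfxy h)
    by_cases hfx : f x ∈ P
    · have hfy : f y ∈ P := hfxy ▸ hfx
      by_cases hx : x ∈ P <;> by_cases hy : y ∈ P
      · exact (hxy (by rw [← show f (f x) = x from hx, hfxy]; exact hy)).elim
      · rw [c_of_mem x hx, c_of_apply_mem y hy hfy]
        decide
      · rw [c_of_mem y hy, c_of_apply_mem x hx hfx]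
        decide
      · exfalso
        obtain ⟨a, b, hab⟩ := h2to1 (f x)
        have h₁ := hab x rfl
        have h₂ := hab y hfxy.symm
        have h₃ := hab (f (f x)) hfx
        have h₄ : f (f x) ≠ x := hx
        have h₅ : f (f x) ≠ y := by rw [hfxy]; exact hy
        grind
    have hfy : f y ∉ P := hfxy ▸ hfx
    by_cases hffx : f (f x) ∈ S
    · rw [c_restart x hfx hffx, c_restart y hfy (hfxy ▸ hffx), ← hfxy]
      exact fun h => hlxy (restartColor_left_injective _ h)
    · rw [c_step x hfx hffx, c_step y hfy (hfxy ▸ hffx)]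
      simp only [F, ← hfxy]
      split_ifs
      · exact fun h => hlxy (transitionColor_injective _ h)
      · exact fun h => hlxy (freshColor_injective _ h)

end TwoToOneColoring

/-- **Proposition.** Let `X` be a standard Borel space and `f : X → X` a 2-to-1 Borel
function. Then the underlying graph of the directed graph `D_f` generated by `f` admits
a Borel proper edge coloring with `4` colors: there is a Borel assignment of colors to
(ordered) edges which is symmetric on edges and gives distinct colors to distinct edges
sharing a vertex. -/
theorem borel_edge_coloring_of_two_to_one {X : Type*} [MeasurableSpace X]
    [StandardBorelSpace X] (f : X → X) (hf : Measurable f)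
    (h2to1 : ∀ y : X, ∃ a b : X, ∀ x : X, f x = y → x = a ∨ x = b) :
    ∃ c : X × X → Fin 4, Measurable c ∧
      (∀ x y : X, x ≠ y → (f x = y ∨ f y = x) → c (x, y) = c (y, x)) ∧
      (∀ x y z : X, y ≠ z →
        (x ≠ y ∧ (f x = y ∨ f y = x)) → (x ≠ z ∧ (f x = z ∨ f z = x)) →
        c (x, y) ≠ c (x, z)) := by
  classical
  obtain ⟨c, hc, hc₂, hcf, hcs⟩ := exists_measurable_source_coloring hf h2to1
  refine ⟨fun p => if f p.1 = p.2 then c p.1 else c p.2, ?_, ?_, ?_⟩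
  · exact Measurable.ite (measurableSet_eq_fun (hf.comp measurable_fst) measurable_snd)
      (hc.comp measurable_fst) (hc.comp measurable_snd)
  · rintro x y - h
    by_cases hx : f x = y <;> by_cases hy : f y = x
    · subst hx
      simp [hy, hc₂ x hy]
    · simp [hx, hy]
    · simp [hx, hy]
    · exact absurd h (by simp [hx, hy])
  · rintro x y z hyz ⟨-, hy⟩ ⟨-, hz⟩
    by_cases hxy : f x = y
    · have hxz : f x ≠ z := hxy ▸ hyz
      have hzx := hz.resolve_left hxz
      subst hzx
      simpa [hxy, hyz] using (hcf z (by rwa [hxy])).symm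
    · have hyx := hy.resolve_left hxy
      by_cases hxz : f x = z
      · subst hyx
        simpa [hxz, hyz.symm] using hcf y (by rw [hxz]; exact hyz.symm)
      · have hzx := hz.resolve_left hxz
        simpa [hxy, hxz] using hcs y z hyz (hyx.trans hzx.symm)
end

section
/- Consider the Bernoulli shift action of ℤⁿ on {0,1}^(ℤⁿ) given by (g·x)(h) = x(h+g), let F(2^(ℤⁿ)) be its free part, and let μ be the product of the uniform (1/2, 1/2) measure. Let D be the directed Schreier graph on F(2^(ℤⁿ)) with respect to the standard generators e_1, …, e_n of ℤⁿ, i.e., with an arc from x to e_i·x for each i. Then D has no μ-measurable kernel: there is no μ-measurable set A ⊆ F(2^(ℤⁿ)) that is independent in the underlying graph of D and such that every x ∉ A has an out-neighbor in A. -/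
open MeasureTheory

/-- The Bernoulli shift action of `ℤⁿ` on `{0,1}^(ℤⁿ)`: `(g · x)(h) = x(h + g)`. -/
def bernoulliShift (n : ℕ) (g : Fin n → ℤ) (x : (Fin n → ℤ) → Bool) :
    (Fin n → ℤ) → Bool :=
  fun h => x (h + g)

/-- The free part `F(2^(ℤⁿ))` of the Bernoulli shift action of `ℤⁿ`. -/
def bernoulliFreePart (n : ℕ) : Set ((Fin n → ℤ) → Bool) :=
  {x | ∀ g : Fin n → ℤ, g ≠ 0 → bernoulliShift n g x ≠ x}

open ProbabilityTheory

section Combinatorics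

variable {n : ℕ}

/-- A configuration on `ℤⁿ` obeying the kernel rule is determined on a box by its values on the
outer faces of the box. -/
lemma kernelRule_eq_of_eq_on_outer_faces {a a' : (Fin n → ℤ) → Prop}
    (ha : ∀ v, a v ↔ ∀ i, ¬ a (v + Pi.single i 1))
    (ha' : ∀ v, a' v ↔ ∀ i, ¬ a' (v + Pi.single i 1)) (M : ℤ)
    (h : ∀ v, (∀ i, 0 ≤ v i ∧ v i ≤ M) → (∃ i, v i = M) → (a v ↔ a' v))
    (v : Fin n → ℤ) (hv : ∀ i, 0 ≤ v i ∧ v i ≤ M) : a v ↔ a' v := by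
  have key : ∀ k : ℕ, ∀ v : Fin n → ℤ, (∀ i, 0 ≤ v i ∧ v i ≤ M) →
      ∑ i, (M - v i) < k → (a v ↔ a' v) := by
    intro k
    induction k with
    | zero =>
      intro v hv hk
      have : 0 ≤ ∑ i, (M - v i) := Finset.sum_nonneg fun i _ => by linarith [(hv i).2]
      simp only [Nat.cast_zero] at hk
      omega
    | succ k ih =>
      intro v hv hk
      by_cases hM : ∃ i, v i = M
      · exact h v hv hM
      push Not at hM
      rw [ha, ha']
      refine forall_congr' fun i => not_congr (ih _ (fun j => ?_) ?_)
      · have h1 := hv j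
        have h2 := hM j
        by_cases hij : j = i
        · subst hij
          simp only [Pi.add_apply, Pi.single_eq_same]
          omega
        · simpa [Pi.single_eq_of_ne hij] using h1
      · have : ∑ j, (M - (v + Pi.single i 1 : Fin n → ℤ) j) = ∑ j, (M - v j) - 1 := by
          simp only [Pi.add_apply, ← sub_sub, Finset.sum_sub_distrib]
          simp
        rw [this]
        push_cast at hk
        omega
  refine key ((∑ i, (M - v i)).toNat + 1) v hv ?_
  have := Int.self_le_toNat (∑ i, (M - v i))
  push_cast
  omega

/-- Configurations obeying the kernel rule realise at most `2 ^ ((M + 1) ^ n - M ^ n)` patterns on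
a box of side `M`. -/
lemma exists_kernelRule_patterns (n M : ℕ) :
    ∃ (K : Type) (_ : Fintype K) (Ψ : K → (Fin n → ℤ) → Prop),
      Fintype.card K = 2 ^ ((M + 1) ^ n - M ^ n) ∧
      ∀ a : (Fin n → ℤ) → Prop, (∀ v, a v ↔ ∀ i, ¬ a (v + Pi.single i 1)) →
        ∃ β, ∀ v : Fin n → ℤ, (∀ i, 0 ≤ v i ∧ v i ≤ M) → (Ψ β v ↔ a v) := by
  classical
  let F : Finset (Fin n → ℤ) := Fintype.piFinset (fun _ => Finset.Icc 0 (M : ℤ)) \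
    Fintype.piFinset (fun _ => Finset.Ico 0 (M : ℤ))
  let R : (F → Bool) → ((Fin n → ℤ) → Prop) → Prop := fun β a =>
    (∀ v, a v ↔ ∀ i, ¬ a (v + Pi.single i 1)) ∧ ∀ v : F, β v ↔ a v
  refine ⟨F → Bool, inferInstance,
    fun β => if h : ∃ a, R β a then h.choose else fun _ => True, ?_, ?_⟩
  · have hsub : Fintype.piFinset (fun _ : Fin n => Finset.Ico 0 (M : ℤ)) ⊆
        Fintype.piFinset (fun _ => Finset.Icc 0 (M : ℤ)) :=
      Fintype.piFinset_subset _ _ fun _ => Finset.Ico_subset_Icc_self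
    have hF : F.card = (M + 1) ^ n - M ^ n := by
      simp only [F, Finset.card_sdiff_of_subset hsub, Fintype.card_piFinset, Int.card_Icc,
        Int.card_Ico, Finset.prod_const, Finset.card_univ, Fintype.card_fin]
      congr 2
    rw [Fintype.card_fun, Fintype.card_coe, hF, Fintype.card_bool]
  · intro a ha
    have hex : ∃ a', R (fun v => decide (a v)) a' := ⟨a, ha, fun v => by simp⟩
    refine ⟨fun v => decide (a v), fun v hv => ?_⟩
    simp only [dif_pos hex]
    refine kernelRule_eq_of_eq_on_outer_faces hex.choose_spec.1 ha M (fun w hw hwM => ?_) v hv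
    suffices hwF : w ∈ F from
      (by simpa using (hex.choose_spec.2 ⟨w, hwF⟩).symm)
    obtain ⟨i, hi⟩ := hwM
    simp only [F, Finset.mem_sdiff, Fintype.mem_piFinset, Finset.mem_Icc, Finset.mem_Ico]
    refine ⟨hw, fun hlt => ?_⟩
    have := (hlt i).2
    omega

lemma not_forall_mul_pow_le_sub_pow (n : ℕ) (s : ℝ) {δ : ℝ} (hδ : 0 < δ) :
    ¬ ∀ k : ℕ, δ * (k : ℝ) ^ n ≤ (s * k + 1) ^ n - (s * k) ^ n := by
  intro h
  have hlim : Filter.Tendsto (fun k : ℕ => (s + 1 / ((k : ℝ) + 1)) ^ n - s ^ n) Filter.atTop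
      (nhds ((s + 0) ^ n - s ^ n)) :=
    ((tendsto_one_div_add_atTop_nhds_zero_nat.const_add s).pow n).sub_const _
  have hle : δ ≤ (s + 0) ^ n - s ^ n := by
    refine ge_of_tendsto' hlim fun k => ?_
    have hk : (0 : ℝ) < (k : ℝ) + 1 := by positivity
    have := h (k + 1)
    push_cast at this
    have e1 : (s * ((k : ℝ) + 1) + 1) = (s + 1 / ((k : ℝ) + 1)) * ((k : ℝ) + 1) := by
      field_simp
    rw [e1, mul_pow, mul_pow, ← sub_mul] at this
    exact le_of_mul_le_mul_right this (pow_pos hk n)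
  simp only [add_zero, sub_self] at hle
  linarith

/-- Translates of a finite set by multiples of a large enough integer are disjoint. -/
lemma exists_injective_add_smul (I : Finset (Fin n → ℤ)) :
    ∃ s : ℕ, ∀ k : ℕ, Function.Injective
      (fun p : (Fin n → Fin k) × I => (p.2 : Fin n → ℤ) + fun i => (s : ℤ) * (p.1 i : ℕ)) := by
  obtain ⟨R, hR⟩ : ∃ R : ℕ, ∀ j ∈ I, ∀ i, (j i).natAbs ≤ R := by
    refine ⟨I.sup fun j => Finset.univ.sup fun i => (j i).natAbs, fun j hj i => ?_⟩
    exact (Finset.le_sup (f := fun i => (j i).natAbs) (Finset.mem_univ i)).trans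
      (Finset.le_sup (f := fun j : Fin n → ℤ => Finset.univ.sup fun i => (j i).natAbs) hj)
  refine ⟨2 * R + 1, fun k => ?_⟩
  rintro ⟨u, j, hj⟩ ⟨u', j', hj'⟩ h
  have hu : u = u' := by
    funext i
    have h1 := congrFun h i
    simp only [Pi.add_apply] at h1
    have h2 := hR j hj i
    have h3 := hR j' hj' i
    apply Fin.ext
    by_contra hne
    have h4 : ((2 * R + 1 : ℕ) : ℤ) * (((u i : ℕ) : ℤ) - ((u' i : ℕ) : ℤ)) = j' i - j i := by
      linear_combination h1
    push_cast at h4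
    rcases Nat.lt_or_gt_of_ne hne with hlt | hlt
    · have : (((u i : ℕ) : ℤ) - ((u' i : ℕ) : ℤ)) ≤ -1 := by omega
      have : (2 * (R : ℤ) + 1) * (((u i : ℕ) : ℤ) - ((u' i : ℕ) : ℤ)) ≤
        (2 * (R : ℤ) + 1) * (-1) := by gcongr
      omega
    · have : 1 ≤ (((u i : ℕ) : ℤ) - ((u' i : ℕ) : ℤ)) := by omega
      have : (2 * (R : ℤ) + 1) * 1 ≤
        (2 * (R : ℤ) + 1) * (((u i : ℕ) : ℤ) - ((u' i : ℕ) : ℤ)) := by gcongr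
      omega
  subst hu
  simpa using h

end Combinatorics

section Bernoulli

variable {n : ℕ} {μ : Measure ((Fin n → ℤ) → Bool)}

lemma bernoulliShift_zero (x : (Fin n → ℤ) → Bool) : bernoulliShift n 0 x = x := by
  funext k
  simp [bernoulliShift]

lemma bernoulliShift_bernoulliShift (g h : Fin n → ℤ) (x : (Fin n → ℤ) → Bool) :
    bernoulliShift n g (bernoulliShift n h x) = bernoulliShift n (h + g) x := by
  funext k
  simp only [bernoulliShift]
  congr 1
  abel

lemma bernoulliShift_mem_bernoulliFreePart (v : Fin n → ℤ) {x : (Fin n → ℤ) → Bool}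
    (hx : x ∈ bernoulliFreePart n) : bernoulliShift n v x ∈ bernoulliFreePart n := by
  intro g hg h
  refine hx g hg ?_
  have := congrArg (bernoulliShift n (-v)) h
  rw [bernoulliShift_bernoulliShift, bernoulliShift_bernoulliShift,
    bernoulliShift_bernoulliShift] at this
  simpa [bernoulliShift_zero] using this

lemma eq_infinitePi_of_cylinders {ι : Type*} {μ : Measure (ι → Bool)} [IsProbabilityMeasure μ]
    (hμ : ∀ (s : Finset ι) (b : ι → Bool),
      μ {x | ∀ g ∈ s, x g = b g} = (1 / 2 : ENNReal) ^ s.card) :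
    μ = Measure.infinitePi fun _ => (PMF.uniformOfFintype Bool).toMeasure := by
  classical
  refine IsProjectiveLimit.unique (P := fun I : Finset ι =>
    Measure.pi fun _ : I => (PMF.uniformOfFintype Bool).toMeasure) (fun I => ?_)
    (Measure.isProjectiveLimit_infinitePi _)
  refine Measure.ext_of_singleton fun b => ?_
  rw [Measure.map_apply (by fun_prop) (measurableSet_singleton b), Measure.pi_singleton]
  have : I.restrict (π := fun _ => Bool) ⁻¹' {b} =
      {x : ι → Bool | ∀ g ∈ I, x g = if h : g ∈ I then b ⟨g, h⟩ else true} := by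
    ext x
    simp only [Set.mem_preimage, Set.mem_singleton_iff, Set.mem_ofPred_eq, funext_iff,
      Finset.restrict, Subtype.forall]
    exact forall₂_congr fun g hg => by rw [dif_pos hg]
  rw [this, hμ]
  simp

lemma measurePreserving_bernoulliShift [IsProbabilityMeasure μ]
    (hμ : ∀ (s : Finset (Fin n → ℤ)) (b : (Fin n → ℤ) → Bool),
      μ {x | ∀ g ∈ s, x g = b g} = (1 / 2 : ENNReal) ^ s.card) (g : Fin n → ℤ) :
    MeasurePreserving (bernoulliShift n g) μ μ := by
  refine ⟨measurable_pi_lambda _ fun h => measurable_pi_apply _, ?_⟩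
  rw [eq_infinitePi_of_cylinders hμ]
  exact Measure.map_infinitePi_infinitePi_of_inj (add_left_injective g)

lemma ae_mem_bernoulliFreePart
    (hμ : ∀ (s : Finset (Fin n → ℤ)) (b : (Fin n → ℤ) → Bool),
      μ {x | ∀ g ∈ s, x g = b g} = (1 / 2 : ENNReal) ^ s.card) :
    ∀ᵐ x ∂μ, x ∈ bernoulliFreePart n := by
  classical
  simp only [bernoulliFreePart, Set.mem_ofPred_eq]
  rw [ae_all_iff]
  intro g
  by_cases hg : g = 0
  · simp [hg]
  rw [ae_iff]
  simp only [hg, not_false_eq_true, forall_const, ne_eq, not_not]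
  have hinj : Function.Injective fun k : ℕ => k • g := by
    intro k l hkl
    by_contra hne
    refine hg (funext fun i => ?_)
    have h1 := congrFun hkl i
    simp only [Pi.smul_apply, nsmul_eq_mul] at h1
    rcases mul_eq_mul_right_iff.1 h1 with h2 | h2
    · exact absurd (by exact_mod_cast h2) hne
    · exact h2
  have hbound : ∀ m : ℕ, μ {x | bernoulliShift n g x = x} ≤ 2 * (1 / 2 : ENNReal) ^ m := by
    intro m
    let s : Finset (Fin n → ℤ) := (Finset.range m).image fun k : ℕ => k • g
    have hs : s.card = m := by
      rw [Finset.card_image_of_injective _ hinj, Finset.card_range]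
    have hsub : {x | bernoulliShift n g x = x} ⊆
        {x | ∀ h ∈ s, x h = true} ∪ {x | ∀ h ∈ s, x h = false} := by
      intro x hx
      have hk : ∀ k : ℕ, x (k • g) = x 0 := by
        intro k
        induction k with
        | zero => simp
        | succ k ih =>
          rw [← ih, succ_nsmul]
          exact congrFun hx (k • g)
      have : ∀ h ∈ s, x h = x 0 := by
        intro h hh
        obtain ⟨k, -, rfl⟩ := Finset.mem_image.1 hh
        exact hk k
      cases h0 : x 0
      · exact Or.inr fun h hh => (this h hh).trans h0
      · exact Or.inl fun h hh => (this h hh).trans h0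
    calc μ {x | bernoulliShift n g x = x} ≤ _ := measure_mono hsub
      _ ≤ _ := measure_union_le _ _
      _ = 2 * (1 / 2 : ENNReal) ^ m := by
        rw [hμ s fun _ => true, hμ s fun _ => false, hs, two_mul]
  have hlim : Filter.Tendsto (fun m : ℕ => 2 * (1 / 2 : ENNReal) ^ m) Filter.atTop
      (nhds (2 * 0)) :=
    ENNReal.Tendsto.const_mul
      (ENNReal.tendsto_pow_atTop_nhds_zero_of_lt_one (by simp)) (by simp)
  rw [mul_zero] at hlim
  exact le_antisymm (ge_of_tendsto' hlim hbound) zero_le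

open scoped Classical in
/-- The weight of a site: `1` at an agreement and `exp (-1)` at a disagreement. -/
noncomputable def agreementWeight (p : Prop) : ℝ := if p then 1 else Real.exp (-1)

lemma agreementWeight_nonneg (p : Prop) : 0 ≤ agreementWeight p := by
  unfold agreementWeight
  split_ifs <;> positivity

lemma agreementWeight_le_one (p : Prop) : agreementWeight p ≤ 1 := by
  unfold agreementWeight
  split_ifs
  · exact le_rfl
  · exact Real.exp_le_one_iff.2 (by norm_num)

lemma exp_neg_one_le_agreementWeight (p : Prop) : Real.exp (-1) ≤ agreementWeight p := by
  unfold agreementWeight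
  split_ifs
  · exact Real.exp_le_one_iff.2 (by norm_num)
  · exact le_rfl

lemma integral_agreementWeight_le {Ω : Type*} [MeasurableSpace Ω] {μ : Measure Ω}
    [IsProbabilityMeasure μ] {C : Set Ω} (hC : MeasurableSet C) {c : ℝ} (hc : 0 ≤ c)
    (h : μ.real C ≤ 1 - c) :
    ∫ x, agreementWeight (x ∈ C) ∂μ ≤ Real.exp (-(c / 2)) := by
  have he : ∀ x, agreementWeight (x ∈ C) =
      Real.exp (-1) + C.indicator (fun _ => 1 - Real.exp (-1)) x := by
    intro x
    by_cases hx : x ∈ C <;> simp [agreementWeight, hx]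
  have hexp : Real.exp (-1) ≤ 1 / 2 := by
    rw [Real.exp_neg, one_div]
    exact inv_anti₀ (by norm_num) (by linarith [Real.add_one_le_exp (1 : ℝ)])
  simp_rw [he]
  rw [integral_add (integrable_const _) ((integrable_const _).indicator hC),
    integral_indicator_const _ hC, integral_const, probReal_univ, smul_eq_mul, smul_eq_mul]
  have h1 := Real.add_one_le_exp (-(c / 2))
  nlinarith

/-- Under the product measure, disjoint blocks of coordinates are independent. -/
lemma iIndepFun_blocks {ι U κ : Type*} {X : Type*} [MeasurableSpace X]
    {ν : Measure X} [IsProbabilityMeasure ν] {f : U × κ → ι} (hf : Function.Injective f) :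
    iIndepFun (fun (u : U) (ω : ι → X) (j : κ) => ω (f (u, j)))
      (Measure.infinitePi fun _ => ν) := by
  rw [iIndepFun_iff_map_fun_eq_infinitePi_map (fun u => by fun_prop)]
  have hu : ∀ u : U, (Measure.infinitePi fun _ : ι => ν).map (fun ω (j : κ) => ω (f (u, j))) =
      Measure.infinitePi fun _ : κ => ν := fun u =>
    Measure.map_infinitePi_infinitePi_of_inj (P := fun _ : ι => ν) (f := fun j => f (u, j))
      (hf.comp (Prod.mk_right_injective u))
  simp_rw [hu]
  rw [← Measure.infinitePi_map_curry (fun (_ : U) (_ : κ) => ν),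
    ← Measure.map_infinitePi_infinitePi_of_inj (P := fun _ : ι => ν) hf,
    Measure.map_map (by fun_prop) (by fun_prop)]
  rfl

/-- A measurable event is approximated by events depending on finitely many coordinates. -/
lemma exists_cylinder_symmDiff_lt {ι : Type*} {X : ι → Type*} [∀ i, MeasurableSpace (X i)]
    {μ : Measure (∀ i, X i)} [IsFiniteMeasure μ] {A : Set (∀ i, X i)}
    (hA : NullMeasurableSet A μ) {ε : ENNReal} (hε : 0 < ε) :
    ∃ (I : Finset ι) (S : Set (∀ i : I, X i)), MeasurableSet S ∧
      μ (symmDiff (cylinder I S) A) < ε := by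
  obtain ⟨t, ht, hlt⟩ := exists_measure_symmDiff_lt_of_generateFrom_isSetRing (μ := μ)
    (C := measurableCylinders X) isSetAlgebra_measurableCylinders.isSetRing
    ⟨{Set.univ}, Set.countable_singleton _,
      Set.singleton_subset_iff.2 (univ_mem_measurableCylinders X), by simp⟩
    generateFrom_measurableCylinders.symm (measurableSet_toMeasurable μ A) hε
  obtain ⟨I, S, hS, rfl⟩ := (mem_measurableCylinders t).1 ht
  refine ⟨I, S, hS, ?_⟩
  exact (measure_congr (ae_eq_set_symmDiff (ae_eq_refl (cylinder I S))
    hA.toMeasurable_ae_eq)).symm.trans_lt hlt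

lemma kernelRule_of_mem_bernoulliFreePart {A : Set ((Fin n → ℤ) → Bool)}
    (hind : ∀ x ∈ A, ∀ i : Fin n, bernoulliShift n (Pi.single i 1) x ∉ A)
    (habs : ∀ x ∈ bernoulliFreePart n, x ∉ A →
      ∃ i : Fin n, bernoulliShift n (Pi.single i 1) x ∈ A)
    {x : (Fin n → ℤ) → Bool} (hx : x ∈ bernoulliFreePart n) (v : Fin n → ℤ) :
    bernoulliShift n v x ∈ A ↔ ∀ i, ¬ bernoulliShift n (v + Pi.single i 1) x ∈ A := by
  simp_rw [← bernoulliShift_bernoulliShift]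
  refine ⟨hind _, fun h => ?_⟩
  by_contra hA
  obtain ⟨i, hi⟩ := habs _ (bernoulliShift_mem_bernoulliFreePart v hx) hA
  exact h i hi

lemma kernel_measure_le_half [IsProbabilityMeasure μ] (hn : 1 ≤ n)
    (hμ : ∀ (s : Finset (Fin n → ℤ)) (b : (Fin n → ℤ) → Bool),
      μ {x | ∀ g ∈ s, x g = b g} = (1 / 2 : ENNReal) ^ s.card)
    {A : Set ((Fin n → ℤ) → Bool)} (hA : NullMeasurableSet A μ)
    (hind : ∀ x ∈ A, ∀ i : Fin n, bernoulliShift n (Pi.single i 1) x ∉ A) :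
    μ.real A ≤ 1 / 2 := by
  have hp := measurePreserving_bernoulliShift hμ (Pi.single ⟨0, hn⟩ 1)
  have hA' := hA.preimage hp.quasiMeasurePreserving
  have hd : Disjoint A (bernoulliShift n (Pi.single ⟨0, hn⟩ 1) ⁻¹' A) :=
    Set.disjoint_left.2 fun x hx hx' => hind x hx _ hx'
  have h1 := measureReal_union₀ (μ := μ) hA' hd.aedisjoint
  rw [hp.measureReal_preimage hA] at h1
  have h2 : μ.real (A ∪ bernoulliShift n (Pi.single ⟨0, hn⟩ 1) ⁻¹' A) ≤ 1 := measureReal_le_one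
  linarith

lemma one_le_mul_kernel_measure [IsProbabilityMeasure μ]
    (hμ : ∀ (s : Finset (Fin n → ℤ)) (b : (Fin n → ℤ) → Bool),
      μ {x | ∀ g ∈ s, x g = b g} = (1 / 2 : ENNReal) ^ s.card)
    {A : Set ((Fin n → ℤ) → Bool)} (hA : NullMeasurableSet A μ)
    (habs : ∀ x ∈ bernoulliFreePart n, x ∉ A →
      ∃ i : Fin n, bernoulliShift n (Pi.single i 1) x ∈ A) :
    1 ≤ (n + 1) * μ.real A := by
  have h1 : μ.real (A ∪ ⋃ i : Fin n, bernoulliShift n (Pi.single i 1) ⁻¹' A) = 1 := by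
    rw [measureReal_def, (prob_compl_eq_zero_iff₀ ?_).1 ?_, ENNReal.toReal_one]
    · exact hA.union (NullMeasurableSet.iUnion fun i =>
        hA.preimage (measurePreserving_bernoulliShift hμ _).quasiMeasurePreserving)
    · refine measure_eq_zero_iff_ae_notMem.2 ?_
      filter_upwards [ae_mem_bernoulliFreePart hμ] with x hx hx'
      simp only [Set.mem_compl_iff, Set.mem_union, Set.mem_iUnion, Set.mem_preimage,
        not_or] at hx'
      exact hx'.2 (habs x hx hx'.1)
  have h2 := measureReal_union_le (μ := μ) A
    (⋃ i : Fin n, bernoulliShift n (Pi.single i 1) ⁻¹' A)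
  have h3 := measureReal_iUnion_fintype_le (μ := μ)
    fun i : Fin n => bernoulliShift n (Pi.single i 1) ⁻¹' A
  simp_rw [(measurePreserving_bernoulliShift hμ _).measureReal_preimage hA] at h3
  simp only [Finset.sum_const, Finset.card_univ, Fintype.card_fin, nsmul_eq_mul] at h3
  linarith

/-- If `A` is well approximated by a local event, then the number of kernel patterns on a box of
side `s * k` is exponentially large in `k ^ n`. -/
lemma mul_pow_le_of_cylinder_approx [IsProbabilityMeasure μ]
    (hμ : ∀ (s : Finset (Fin n → ℤ)) (b : (Fin n → ℤ) → Bool),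
      μ {x | ∀ g ∈ s, x g = b g} = (1 / 2 : ENNReal) ^ s.card)
    {A : Set ((Fin n → ℤ) → Bool)}
    (hind : ∀ x ∈ A, ∀ i : Fin n, bernoulliShift n (Pi.single i 1) x ∉ A)
    (habs : ∀ x ∈ bernoulliFreePart n, x ∉ A →
      ∃ i : Fin n, bernoulliShift n (Pi.single i 1) x ∈ A)
    {I : Finset (Fin n → ℤ)} {S : Set (I → Bool)} (hS : MeasurableSet S) {c : ℝ} (hc : 0 ≤ c)
    (hAS : μ.real (symmDiff (cylinder I S) A) ≤ c / 4)
    (hS₁ : μ.real (cylinder I S) ≤ 1 - c) (hS₀ : c ≤ μ.real (cylinder I S)) {s k : ℕ}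
    (hs : Function.Injective
      (fun p : (Fin n → Fin k) × I => (p.2 : Fin n → ℤ) + fun i => (s : ℤ) * (p.1 i : ℕ))) :
    c / 4 * (k : ℝ) ^ n ≤ ((s : ℝ) * k + 1) ^ n - ((s : ℝ) * k) ^ n := by
  classical
  obtain ⟨K, _, Ψ, hK, hΨ⟩ := exists_kernelRule_patterns n (s * k)
  set B : Set ((Fin n → ℤ) → Bool) := cylinder I S
  have hB : MeasurableSet B := hS.cylinder I
  let site : (Fin n → Fin k) → (Fin n → ℤ) := fun u i => (s : ℤ) * (u i : ℕ)
  let E : Set ((Fin n → ℤ) → Bool) := toMeasurable μ (symmDiff B A)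
  have hE : MeasurableSet E := measurableSet_toMeasurable _ _
  have hEμ : μ.real E ≤ c / 4 := by
    rwa [measureReal_def, measure_toMeasurable, ← measureReal_def]
  have hmp := measurePreserving_bernoulliShift hμ
  let W : K → ((Fin n → ℤ) → Bool) → ℝ := fun β x =>
    ∏ u, agreementWeight (bernoulliShift n (site u) x ∈ B ↔ Ψ β (site u))
  have hWmeas : ∀ q : Prop, Measurable fun x : (Fin n → ℤ) → Bool =>
      agreementWeight (x ∈ B ↔ q) := by
    intro q
    unfold agreementWeight
    by_cases hq : q
    · simpa [hq] using Measurable.ite (p := (· ∈ B)) hB measurable_const measurable_const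
    · simpa [hq] using Measurable.ite (p := (· ∈ B)) hB measurable_const measurable_const
  have hWint : ∀ β, ∫ x, W β x ∂μ ≤ Real.exp (-(c / 2)) ^ (k ^ n) := by
    intro β
    have hindep : iIndepFun (fun (u : Fin n → Fin k) (x : (Fin n → ℤ) → Bool) (j : I) =>
        x ((j : Fin n → ℤ) + site u)) μ := by
      rw [eq_infinitePi_of_cylinders hμ]
      exact iIndepFun_blocks hs
    have hprod := hindep.integral_fun_prod_comp
      (f := fun u y => agreementWeight (y ∈ S ↔ Ψ β (site u)))
      (fun u => (measurable_pi_lambda _ fun j => measurable_pi_apply _).aemeasurable)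
      (fun u => (measurable_of_finite _).aestronglyMeasurable)
    change ∫ x, W β x ∂μ = ∏ u, ∫ x,
      agreementWeight (bernoulliShift n (site u) x ∈ B ↔ Ψ β (site u)) ∂μ at hprod
    rw [hprod]
    have hsite : ∀ u, ∫ x, agreementWeight (bernoulliShift n (site u) x ∈ B ↔ Ψ β (site u)) ∂μ ≤
        Real.exp (-(c / 2)) := by
      intro u
      rw [← integral_map (φ := bernoulliShift n (site u))
        (f := fun x => agreementWeight (x ∈ B ↔ Ψ β (site u)))
        (hmp _).measurable.aemeasurable (hWmeas _).aestronglyMeasurable, (hmp _).map_eq]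
      by_cases hq : Ψ β (site u)
      · simpa only [hq, iff_true] using integral_agreementWeight_le hB hc hS₁
      · have hBc : μ.real Bᶜ ≤ 1 - c := by
          rw [probReal_compl_eq_one_sub hB]
          linarith
        simpa only [hq, iff_false, Set.mem_compl_iff] using
          integral_agreementWeight_le hB.compl hc hBc
    refine (Finset.prod_le_prod (fun u _ => integral_nonneg fun x => agreementWeight_nonneg _)
      fun u _ => hsite u).trans_eq ?_
    simp
  have hWbdd : ∀ β, Integrable (W β) μ := by
    intro β
    refine Integrable.of_bound (C := 1)
      (Finset.measurable_prod _ fun u _ =>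
        (hWmeas _).comp (hmp (site u)).measurable).aestronglyMeasurable
      (Filter.Eventually.of_forall fun x => ?_)
    rw [Real.norm_of_nonneg (Finset.prod_nonneg fun u _ => agreementWeight_nonneg _)]
    exact Finset.prod_le_one (fun u _ => agreementWeight_nonneg _)
      fun u _ => agreementWeight_le_one _
  let D : ((Fin n → ℤ) → Bool) → ℝ := fun x =>
    ∑ u, E.indicator (fun _ => (1 : ℝ)) (bernoulliShift n (site u) x)
  have hDterm : ∀ u, Integrable
      (fun x => E.indicator (fun _ => (1 : ℝ)) (bernoulliShift n (site u) x)) μ := fun u =>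
    (hmp (site u)).integrable_comp_of_integrable ((integrable_const (1 : ℝ)).indicator hE)
  have hDint : Integrable D μ := integrable_finsetSum _ fun u _ => hDterm u
  have hDle : ∫ x, D x ∂μ ≤ c / 4 * (k : ℝ) ^ n := by
    have hterm : ∀ u, ∫ x, E.indicator (fun _ => (1 : ℝ)) (bernoulliShift n (site u) x) ∂μ =
        μ.real E := by
      intro u
      rw [← integral_map (φ := bernoulliShift n (site u))
        (f := E.indicator fun _ => (1 : ℝ)) (hmp _).measurable.aemeasurable
        (measurable_const.indicator hE).aestronglyMeasurable, (hmp _).map_eq,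
        integral_indicator_const _ hE, smul_eq_mul, mul_one]
    rw [integral_finsetSum _ fun u _ => hDterm u]
    simp only [hterm, Finset.sum_const, Finset.card_univ, Fintype.card_fun, Fintype.card_fin,
      nsmul_eq_mul, Nat.cast_pow]
    rw [mul_comm]
    gcongr
  have hpt : ∀ᵐ x ∂μ, Real.exp (-(c / 4 * (k : ℝ) ^ n)) * (1 + c / 4 * (k : ℝ) ^ n - D x) ≤
      ∑ β, W β x := by
    filter_upwards [ae_mem_bernoulliFreePart hμ] with x hx
    obtain ⟨β, hβ⟩ := hΨ (fun v => bernoulliShift n v x ∈ A)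
      (kernelRule_of_mem_bernoulliFreePart hind habs hx)
    have hexp : Real.exp (-(c / 4 * (k : ℝ) ^ n)) * (1 + c / 4 * (k : ℝ) ^ n - D x) ≤
        Real.exp (-D x) := by
      have : Real.exp (-D x) = Real.exp (-(c / 4 * (k : ℝ) ^ n)) *
          Real.exp (c / 4 * (k : ℝ) ^ n - D x) := by
        rw [← Real.exp_add]
        congr 1
        ring
      rw [this]
      gcongr
      linarith [Real.add_one_le_exp (c / 4 * (k : ℝ) ^ n - D x)]
    have hDW : Real.exp (-D x) ≤ W β x := by
      simp only [D, W]
      rw [← Finset.sum_neg_distrib, Real.exp_sum]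
      refine Finset.prod_le_prod (fun u _ => (Real.exp_pos _).le) fun u _ => ?_
      by_cases hxE : bernoulliShift n (site u) x ∈ E
      · simpa [hxE] using exp_neg_one_le_agreementWeight _
      · have hBA : bernoulliShift n (site u) x ∉ symmDiff B A := fun h =>
          hxE (subset_toMeasurable _ _ h)
        have hbox : ∀ i, 0 ≤ site u i ∧ site u i ≤ ((s * k : ℕ) : ℤ) := by
          intro i
          simp only [site]
          refine ⟨by positivity, ?_⟩
          push_cast
          gcongr
          exact (u i).2.le
        have hagree : bernoulliShift n (site u) x ∈ B ↔ Ψ β (site u) := by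
          rw [hβ _ hbox]
          rw [Set.mem_symmDiff] at hBA
          tauto
        simp [hxE, agreementWeight, hagree]
    exact (hexp.trans hDW).trans (Finset.single_le_sum (f := fun β => W β x)
      (fun β _ => Finset.prod_nonneg fun u _ => agreementWeight_nonneg _) (Finset.mem_univ β))
  have hmain : Real.exp (-(c / 4 * (k : ℝ) ^ n)) ≤
      2 ^ ((s * k + 1) ^ n - (s * k) ^ n) * Real.exp (-(c / 2)) ^ (k ^ n) := by
    calc Real.exp (-(c / 4 * (k : ℝ) ^ n))
        ≤ Real.exp (-(c / 4 * (k : ℝ) ^ n)) * (1 + c / 4 * (k : ℝ) ^ n - ∫ x, D x ∂μ) :=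
          le_mul_of_one_le_right (Real.exp_pos _).le (by linarith)
      _ = ∫ x, Real.exp (-(c / 4 * (k : ℝ) ^ n)) * (1 + c / 4 * (k : ℝ) ^ n - D x) ∂μ := by
          rw [integral_const_mul, integral_sub (integrable_const _) hDint, integral_const,
            probReal_univ, one_smul]
      _ ≤ ∫ x, ∑ β, W β x ∂μ :=
          integral_mono_ae (((integrable_const _).sub hDint).const_mul _)
            (integrable_finsetSum _ fun β _ => hWbdd β) hpt
      _ = ∑ β, ∫ x, W β x ∂μ := integral_finsetSum _ fun β _ => hWbdd β
      _ ≤ ∑ _β : K, Real.exp (-(c / 2)) ^ (k ^ n) := Finset.sum_le_sum fun β _ => hWint β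
      _ = _ := by
          rw [Finset.sum_const, Finset.card_univ, hK, nsmul_eq_mul]
          push_cast
          rfl
  have htwo : (2 : ℝ) ^ ((s * k + 1) ^ n - (s * k) ^ n) ≤
      Real.exp (((s : ℝ) * k + 1) ^ n - ((s : ℝ) * k) ^ n) := by
    have hcast : (((s * k + 1) ^ n - (s * k) ^ n : ℕ) : ℝ) =
        ((s : ℝ) * k + 1) ^ n - ((s : ℝ) * k) ^ n := by
      rw [Nat.cast_sub (Nat.pow_le_pow_left (Nat.le_succ _) n)]
      push_cast
      rfl
    rw [← hcast, ← mul_one (((s * k + 1) ^ n - (s * k) ^ n : ℕ) : ℝ), Real.exp_nat_mul]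
    gcongr
    linarith [Real.add_one_le_exp (1 : ℝ)]
  have hfin : Real.exp (-(c / 4 * (k : ℝ) ^ n)) ≤
      Real.exp (((s : ℝ) * k + 1) ^ n - ((s : ℝ) * k) ^ n + (k : ℝ) ^ n * (-(c / 2))) := by
    refine hmain.trans ?_
    rw [Real.exp_add, ← Nat.cast_pow, Real.exp_nat_mul]
    gcongr
  have := Real.exp_le_exp.1 hfin
  linarith

end Bernoulli

/-- **Proposition.** Let `μ` be the Bernoulli `(1/2, 1/2)` product measure on
`{0,1}^(ℤⁿ)` (characterized by its values on cylinder sets), `n ≥ 1`. Then the directed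
Schreier graph of the Bernoulli shift on the free part `F(2^(ℤⁿ))` with respect to the
standard generators `e₁, …, eₙ` of `ℤⁿ` has no `μ`-measurable kernel: there is no
`μ`-measurable set `A ⊆ F(2^(ℤⁿ))` that is independent in the underlying graph and such
that every free point not in `A` has an out-neighbor in `A`. -/
theorem no_measurable_kernel_bernoulli_shift (n : ℕ) (hn : 1 ≤ n)
    (μ : Measure ((Fin n → ℤ) → Bool)) [IsProbabilityMeasure μ]
    (hμ : ∀ (s : Finset (Fin n → ℤ)) (b : (Fin n → ℤ) → Bool),
      μ {x | ∀ g ∈ s, x g = b g} = (1 / 2 : ENNReal) ^ s.card) :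
    ¬ ∃ A : Set ((Fin n → ℤ) → Bool),
      A ⊆ bernoulliFreePart n ∧ NullMeasurableSet A μ ∧
      (∀ x ∈ A, ∀ i : Fin n, bernoulliShift n (Pi.single i 1) x ∉ A) ∧
      (∀ x ∈ bernoulliFreePart n, x ∉ A →
        ∃ i : Fin n, bernoulliShift n (Pi.single i 1) x ∈ A) := by
  rintro ⟨A, -, hA, hind, habs⟩
  have hle := kernel_measure_le_half hn hμ hA hind
  have hge := one_le_mul_kernel_measure hμ hA habs
  have hn' : (1 : ℝ) ≤ n := by exact_mod_cast hn
  set c : ℝ := 1 / (2 * (n + 1)) with hc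
  have hc0 : 0 < c := by positivity
  have hc1 : c * (2 * (n + 1)) = 1 := by
    rw [hc]
    field_simp
  have hc4 : c ≤ 1 / 4 := by nlinarith
  have hAc : 2 * c ≤ μ.real A := by
    have : (n + 1) * (2 * c) ≤ (n + 1) * μ.real A := by linarith
    exact le_of_mul_le_mul_left this (by positivity)
  obtain ⟨I, S, hS, hlt⟩ := exists_cylinder_symmDiff_lt hA
    (ε := ENNReal.ofReal (c / 4)) (ENNReal.ofReal_pos.2 (by positivity))
  have hAS : μ.real (symmDiff (cylinder I S) A) ≤ c / 4 :=
    ENNReal.toReal_le_of_le_ofReal (by positivity) hlt.le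
  have hdiff := abs_le.1 ((abs_measureReal_sub_le_measureReal_symmDiff
    (hS.cylinder I).nullMeasurableSet hA).trans hAS)
  obtain ⟨s, hs⟩ := exists_injective_add_smul I
  exact not_forall_mul_pow_le_sub_pow n s (by positivity : 0 < c / 4) fun k =>
    mul_pow_le_of_cylinder_approx hμ hind habs hS hc0.le hAS (by linarith [hdiff.2])
      (by linarith [hdiff.1]) (hs k)
end
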